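/- The derivative of the fundamental endomorphism is a reflection across the horizontal space: Let A be a fanning frame in V with fundamental endomorphism F(t). Then t ↦ F(t) is smooth, and its derivative satisfies Ḟ(t)∘Ḟ(t) = id_V and Ḟ(t)a_i(t) = −a_i(t) for all i and t; moreover V = ℓ(t) ⊕ h(t), where ℓ(t) is the span of a_1(t), …, a_n(t) (contained in the (−1)-eigenspace of Ḟ(t)) and h(t) = ker(Ḟ(t) − id_V) is the (+1)-eigenspace (the horizontal space), each of dimension n. -/

import Mathlib

open Submodule in
/-- A linear map that is `-1` on `p` and the identity modulo `p` is a reflection: it is an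
involution and its fixed space is a complement of `p`. -/
theorem LinearMap.involutive_and_isCompl_ker_sub_id {V : Type*} [AddCommGroup V] [Module ℝ V]
    (f : V →ₗ[ℝ] V) (p : Submodule ℝ V) (hneg : ∀ v ∈ p, f v = -v)
    (hsub : ∀ v, v - f v ∈ p) :
    (∀ v, f (f v) = v) ∧ IsCompl p (LinearMap.ker (f - LinearMap.id)) := by
  have hinv : ∀ v, f (f v) = v := by
    intro v
    have h := hneg _ (hsub v)
    rw [map_sub, neg_sub] at h
    exact sub_right_injective h
  refine ⟨hinv, ?_, ?_⟩
  · rw [disjoint_def]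
    intro v hv hk
    have h : f v = v := sub_eq_zero.1 hk
    linear_combination (norm := module) (1 / 2 : ℝ) • (hneg v hv - h)
  · rw [codisjoint_iff, eq_top_iff]
    intro v _
    refine mem_sup.2 ⟨(1 / 2 : ℝ) • (v - f v), p.smul_mem _ (hsub v),
      (1 / 2 : ℝ) • (v + f v), ?_, by module⟩
    simp only [LinearMap.mem_ker, LinearMap.sub_apply, LinearMap.id_apply, map_smul, map_add,
      hinv]
    module

/-- **Ḟ(t) is a reflection across the horizontal space.**  For a fanning frame `A` with
fundamental endomorphism `F(t)` and derivative `Ḟ(t)`: `Ḟ(t)² = id`, `Ḟ(t) a_i(t) = −a_i(t)`,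
and `V = ℓ(t) ⊕ h(t)`, where `ℓ(t) = span(a_i(t))` lies in the `(−1)`-eigenspace and
`h(t) = ker(Ḟ(t) − id)` is the `(+1)`-eigenspace, each of dimension `n`. -/
theorem deriv_fundamental_endomorphism_is_reflection
    {V : Type*} [NormedAddCommGroup V] [NormedSpace ℝ V] [FiniteDimensional ℝ V]
    {n : ℕ} (hn : 0 < n) (hdim : Module.finrank ℝ V = 2 * n)
    (A A' : ℝ → Fin n → V)
    (hA : ∀ i, ContDiff ℝ (⊤ : ℕ∞) (fun t => A t i))
    (hA' : ∀ i t, HasDerivAt (fun s => A s i) (A' t i) t)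
    (hfan : ∀ t, LinearIndependent ℝ (Sum.elim (A t) (A' t)) ∧
      Submodule.span ℝ (Set.range (Sum.elim (A t) (A' t))) = ⊤)
    (F F' : ℝ → V →L[ℝ] V)
    (hF0 : ∀ t i, F t (A t i) = 0)
    (hF1 : ∀ t i, F t (A' t i) = A t i)
    (hFd : ∀ t, HasDerivAt F (F' t) t) :
    ∀ t, (∀ v : V, F' t (F' t v) = v) ∧
      (∀ i, F' t (A t i) = -(A t i)) ∧
      IsCompl (Submodule.span ℝ (Set.range (A t)))
        (LinearMap.ker (F' t - ContinuousLinearMap.id ℝ V).toLinearMap) ∧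
      Module.finrank ℝ (Submodule.span ℝ (Set.range (A t))) = n ∧
      Module.finrank ℝ (LinearMap.ker (F' t - ContinuousLinearMap.id ℝ V).toLinearMap) = n := by
  intro t
  obtain ⟨hli, hspan⟩ := hfan t
  set ℓ := Submodule.span ℝ (Set.range (A t))
  have hmem : ∀ i, A t i ∈ ℓ := fun i => Submodule.subset_span ⟨i, rfl⟩
  have hA'' : ∀ i, DifferentiableAt ℝ (fun s => A' s i) t := by
    intro i
    have h : deriv (fun s => A s i) = fun s => A' s i := funext fun s => (hA' i s).deriv
    rw [← h]
    exact ((contDiff_infty_iff_deriv.1 (hA i)).2.differentiable (by simp)) t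
  have hF'A : ∀ i, F' t (A t i) = -(A t i) := by
    intro i
    have h := ((hFd t).clm_apply (hA' i t)).unique
      ((hasDerivAt_const t (0 : V)).congr_of_eventuallyEq (.of_forall fun s => hF0 s i))
    rw [hF1] at h
    exact eq_neg_of_add_eq_zero_left h
  have hF'A' : ∀ i, F' t (A' t i) + F t (deriv (fun s => A' s i) t) = A' t i := fun i =>
    ((hFd t).clm_apply (hA'' i).hasDerivAt).unique
      ((hA' i t).congr_of_eventuallyEq (.of_forall fun s => hF1 s i))
  have hFmem : ∀ v, F t v ∈ ℓ := by
    intro v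
    have h : Submodule.span ℝ (Set.range (Sum.elim (A t) (A' t))) ≤
        ℓ.comap (F t).toLinearMap := by
      rw [Submodule.span_le]
      rintro _ ⟨i | i, rfl⟩
      · simp [hF0]
      · simpa [hF1] using hmem i
    exact h (hspan ▸ Submodule.mem_top)
  have hneg : ∀ v ∈ ℓ, F' t v = -v := by
    intro v hv
    induction hv using Submodule.span_induction with
    | mem _ hx => obtain ⟨i, rfl⟩ := hx; exact hF'A i
    | zero => simp
    | add x y _ _ hx hy => rw [map_add, hx, hy, neg_add]
    | smul c x _ hx => rw [map_smul, hx, smul_neg]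
  have hsub : ∀ v, v - F' t v ∈ ℓ := by
    intro v
    have h : Submodule.span ℝ (Set.range (Sum.elim (A t) (A' t))) ≤
        ℓ.comap (LinearMap.id - (F' t).toLinearMap) := by
      rw [Submodule.span_le]
      rintro _ ⟨i | i, rfl⟩
      · simpa [hF'A] using ℓ.add_mem (hmem i) (hmem i)
      · have h' := hFmem (deriv (fun s => A' s i) t)
        rw [← sub_eq_of_eq_add' (hF'A' i).symm] at h'
        simpa using h'
    exact h (hspan ▸ Submodule.mem_top)
  obtain ⟨hinv, hcompl⟩ :=
    LinearMap.involutive_and_isCompl_ker_sub_id (F' t).toLinearMap ℓ hneg hsub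
  have hrank : Module.finrank ℝ ℓ = n :=
    (finrank_span_eq_card (hli.comp Sum.inl Sum.inl_injective)).trans (Fintype.card_fin n)
  have hsum : Module.finrank ℝ ℓ + Module.finrank ℝ
      (LinearMap.ker (F' t - ContinuousLinearMap.id ℝ V).toLinearMap) = Module.finrank ℝ V :=
    Submodule.finrank_add_eq_of_isCompl hcompl
  refine ⟨hinv, hF'A, hcompl, hrank, ?_⟩
  omega
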